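/- arXiv:1612.05684 — 6 statements merged into one kernel-verified Lean document; each statement's English description precedes it below -/
import Mathlib

section
/- Weak duality for the canonical dual of the Knapsack problem: for every binary vector ρ ∈ {0,1}^n with ∑_e a_e ρ_e ≤ V_c, and every pair (σ, ς) with σ_e > 0 for all e and ς ≥ 0, one has P^d(σ, ς) ≤ −∑_e c_e ρ_e. -/
/-- Weak duality for the canonical dual of the Knapsack problem. -/
theorem knapsack_weak_duality (n : ℕ) (c a : Fin n → ℝ) (Vc : ℝ)
    (ρ : Fin n → ℝ) (hbin : ∀ e, ρ e = 0 ∨ ρ e = 1)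
    (hfeas : ∑ e, a e * ρ e ≤ Vc)
    (σ : Fin n → ℝ) (hσ : ∀ e, 0 < σ e) (ς : ℝ) (hς : 0 ≤ ς) :
    -(1/4) * ∑ e, (σ e - ς * a e + c e)^2 / σ e - ς * Vc ≤ -∑ e, c e * ρ e := by
  have key : ∀ e, c e * ρ e - ς * (a e * ρ e) ≤ (1/4) * ((σ e - ς * a e + c e)^2 / σ e) := by
    intro e
    have h := hσ e
    rcases hbin e with h0 | h1
    · rw [h0]
      have : 0 ≤ (σ e - ς * a e + c e)^2 / σ e := by positivity
      linarith
    · rw [h1]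
      have : 4 * (c e - ς * a e) ≤ (σ e - ς * a e + c e)^2 / σ e := by
        rw [le_div_iff₀ h]
        nlinarith [sq_nonneg (σ e - (c e - ς * a e))]
      linarith
  have hs := Finset.sum_le_sum (fun e (_ : e ∈ Finset.univ) => key e)
  rw [Finset.sum_sub_distrib, ← Finset.mul_sum, ← Finset.mul_sum] at hs
  have hm := mul_le_mul_of_nonneg_left hfeas hς
  linarith
end

section
/- Analytical solution of the Knapsack problem via canonical duality (Theorem 2): suppose σ̄ : Fin n → ℝ with σ̄_e > 0 for all e and ς̄ ≥ 0 are such that the vector ρ̄ defined by ρ̄_e = τ_e(σ̄,ς̄)/(2σ̄_e) satisfies ρ̄_e ∈ {0,1} for all e, ∑_e a_e ρ̄_e ≤ V_c, and the complementarity condition ς̄·(∑_e a_e ρ̄_e − V_c) = 0. Then ρ̄ is a global minimizer of P(ρ) = −∑_e c_e ρ_e over all binary vectors ρ ∈ {0,1}^n with ∑_e a_e ρ_e ≤ V_c, and moreover −∑_e c_e ρ̄_e = P^d(σ̄, ς̄). -/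
/-- Analytical solution of the Knapsack problem via canonical duality (Theorem 2). -/
theorem knapsack_analytic_solution (n : ℕ) (c a : Fin n → ℝ) (Vc : ℝ)
    (σ : Fin n → ℝ) (hσ : ∀ e, 0 < σ e) (ς : ℝ) (hς : 0 ≤ ς)
    (ρbar : Fin n → ℝ)
    (hdef : ∀ e, ρbar e = (σ e - ς * a e + c e) / (2 * σ e))
    (hbin : ∀ e, ρbar e = 0 ∨ ρbar e = 1)
    (hfeas : ∑ e, a e * ρbar e ≤ Vc)
    (hcomp : ς * (∑ e, a e * ρbar e - Vc) = 0) :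
    (∀ ρ : Fin n → ℝ, (∀ e, ρ e = 0 ∨ ρ e = 1) → ∑ e, a e * ρ e ≤ Vc →
        -∑ e, c e * ρbar e ≤ -∑ e, c e * ρ e) ∧
    -∑ e, c e * ρbar e = -(1/4) * ∑ e, (σ e - ς * a e + c e)^2 / σ e - ς * Vc := by
  have hτ : ∀ e, σ e - ς * a e + c e = 2 * σ e * ρbar e := by
    intro e
    have h := (hσ e).ne'
    rw [hdef e]
    field_simp
  constructor
  · intro ρ hρ hf
    have h1 : ∑ e, (c e * ρ e - ς * (a e * ρ e)) ≤
        ∑ e, (c e * ρbar e - ς * (a e * ρbar e)) := by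
      apply Finset.sum_le_sum
      intro e _
      have ht := hτ e
      have hs := hσ e
      rcases hbin e with h | h <;> rcases hρ e with h' | h' <;>
        rw [h] at ht <;> rw [h, h'] <;> linarith
    simp only [Finset.sum_sub_distrib, ← Finset.mul_sum] at h1
    have h2 := mul_le_mul_of_nonneg_left hf hς
    linarith
  · have h1 : ∑ e, (σ e - ς * a e + c e) ^ 2 / σ e =
        ∑ e, 4 * (c e * ρbar e - ς * (a e * ρbar e)) := by
      apply Finset.sum_congr rfl
      intro e _
      have ht := hτ e
      have hs := (hσ e).ne'
      rw [ht]
      rcases hbin e with h | h <;> rw [h] at ht ⊢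
      · simp
      · field_simp
        linear_combination (-4) * ht
    rw [h1, ← Finset.mul_sum, Finset.sum_sub_distrib, ← Finset.mul_sum]
    linear_combination (-1) * hcomp
end

section
/- Complementary–dual principle (Theorem 1, concrete form): suppose (ρ̄, σ̄, ς̄) with σ̄_e > 0 for all e and ς̄ ≥ 0 satisfies the KKT conditions: stationarity −c_e + σ̄_e(2ρ̄_e − 1) + ς̄ a_e = 0 for all e, ρ̄_e² = ρ̄_e for all e, ∑_e a_e ρ̄_e ≤ V_c, and ς̄·(∑_e a_e ρ̄_e − V_c) = 0. Then the three values coincide: −∑_e c_e ρ̄_e = Ξ(ρ̄, σ̄, ς̄) = P^d(σ̄, ς̄). -/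
/-- Complementary–dual principle (Theorem 1, concrete form). -/
theorem complementary_dual_principle (n : ℕ) (c a : Fin n → ℝ) (Vc : ℝ)
    (ρbar σbar : Fin n → ℝ) (ςbar : ℝ)
    (hσ : ∀ e, 0 < σbar e) (hς : 0 ≤ ςbar)
    (hstat : ∀ e, -c e + σbar e * (2 * ρbar e - 1) + ςbar * a e = 0)
    (hbin : ∀ e, (ρbar e)^2 = ρbar e)
    (hfeas : ∑ e, a e * ρbar e ≤ Vc)
    (hcomp : ςbar * (∑ e, a e * ρbar e - Vc) = 0) :
    -∑ e, c e * ρbar e =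
      (-∑ e, c e * ρbar e) + (∑ e, σbar e * ((ρbar e)^2 - ρbar e)) + ςbar * (∑ e, a e * ρbar e - Vc) ∧
    (-∑ e, c e * ρbar e) + (∑ e, σbar e * ((ρbar e)^2 - ρbar e)) + ςbar * (∑ e, a e * ρbar e - Vc) =
      -(1/4) * ∑ e, (σbar e - ςbar * a e + c e)^2 / σbar e - ςbar * Vc := by
  have h0 : ∑ e, σbar e * ((ρbar e)^2 - ρbar e) = 0 :=
    Finset.sum_eq_zero fun e _ => by rw [hbin e]; ring
  refine ⟨by rw [h0, hcomp]; ring, ?_⟩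
  have h1 : ∀ e, (σbar e - ςbar * a e + c e)^2 / σbar e =
      4 * (c e * ρbar e) - 4 * (σbar e * ((ρbar e)^2 - ρbar e)) - 4 * (ςbar * (a e * ρbar e)) := by
    intro e
    have h2 : σbar e - ςbar * a e + c e = 2 * σbar e * ρbar e := by linarith [hstat e]
    have h3 : c e = σbar e * (2 * ρbar e - 1) + ςbar * a e := by linarith [hstat e]
    have h4 := (hσ e).ne'
    rw [h2, h3]
    field_simp
    ring
  rw [Finset.sum_congr rfl fun e _ => h1 e, Finset.sum_sub_distrib, Finset.sum_sub_distrib,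
    ← Finset.mul_sum, ← Finset.mul_sum, ← Finset.mul_sum, ← Finset.mul_sum]
  ring
end

section
/- Concavity of the canonical dual function: the function (σ, ς) ↦ P^d(σ, ς) is concave on the open convex set {(σ, ς) ∈ ℝ^n × ℝ : σ_e > 0 for all e}. -/
lemma quad_over_lin (s t x y u v : ℝ) (hs : 0 ≤ s) (ht : 0 ≤ t) (hx : 0 < x) (hy : 0 < y)
    (hd : 0 < s * x + t * y) (hst : s + t = 1) :
    (s * u + t * v)^2 / (s * x + t * y) ≤ s * (u^2 / x) + t * (v^2 / y) := by
  have key : s * (u^2 / x) + t * (v^2 / y) =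
      (s * u^2 * y + t * v^2 * x) / (x * y) := by
    field_simp
  rw [key, div_le_div_iff₀ hd (mul_pos hx hy)]
  have h : 0 ≤ s * t * (u * y - v * x)^2 := by positivity
  have ht' : t = 1 - s := by linarith
  subst ht'
  nlinarith [h]

/-- Concavity of the canonical dual function on `{(σ, ς) : σ > 0}`. -/
theorem Pd_concaveOn (n : ℕ) (c a : Fin n → ℝ) (Vc : ℝ) :
    ConcaveOn ℝ {p : (Fin n → ℝ) × ℝ | ∀ e, 0 < p.1 e}
      (fun p : (Fin n → ℝ) × ℝ =>
        -(1/4) * ∑ e, (p.1 e - p.2 * a e + c e)^2 / p.1 e - p.2 * Vc) := by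
  have pos : ∀ s t x y : ℝ, 0 ≤ s → 0 ≤ t → s + t = 1 → 0 < x → 0 < y →
      0 < s * x + t * y := by
    intro s t x y hs ht hst hx hy
    rcases hs.eq_or_lt with h | h
    · have : t = 1 := by linarith
      subst this
      rw [← h]
      linarith
    · have h1 := mul_pos h hx
      have h2 := mul_nonneg ht hy.le
      linarith
  refine ⟨?_, ?_⟩
  · intro p hp q hq s t hs ht hst e
    exact pos s t _ _ hs ht hst (hp e) (hq e)
  · intro p hp q hq s t hs ht hst
    have hsum : ∑ e, ((s * p.1 e + t * q.1 e) - (s * p.2 + t * q.2) * a e + c e)^2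
          / (s * p.1 e + t * q.1 e) ≤
        s * ∑ e, (p.1 e - p.2 * a e + c e)^2 / p.1 e
          + t * ∑ e, (q.1 e - q.2 * a e + c e)^2 / q.1 e := by
      rw [Finset.mul_sum, Finset.mul_sum, ← Finset.sum_add_distrib]
      refine Finset.sum_le_sum fun e _ => ?_
      have h := quad_over_lin s t (p.1 e) (q.1 e) (p.1 e - p.2 * a e + c e)
        (q.1 e - q.2 * a e + c e) hs ht (hp e) (hq e)
        (pos s t _ _ hs ht hst (hp e) (hq e)) hst
      have e1 : (s * p.1 e + t * q.1 e) - (s * p.2 + t * q.2) * a e + c e =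
          s * (p.1 e - p.2 * a e + c e) + t * (q.1 e - q.2 * a e + c e) := by
        linear_combination (-c e) * hst
      rw [e1]
      exact h
    simp only [Prod.fst_add, Prod.snd_add, Prod.smul_fst, Prod.smul_snd, Pi.add_apply,
      Pi.smul_apply, smul_eq_mul]
    linarith [hsum]
end

section
/- Global optimality from a critical point of the perturbed dual (Theorem 3, optimality part): let a_e > 0 for all e, σ : Fin n → ℝ with σ_e > 0 for all e, and ς ≥ 0. Define ρ_e = τ_e(σ,ς)/(2σ_e). If ρ_e ∈ {0,1} for all e and the stationarity condition in ς holds, i.e. ∑_e a_e ρ_e = V_c, then ρ is a global minimizer of P(ρ') = −∑_e c_e ρ'_e over all binary vectors ρ' ∈ {0,1}^n with ∑_e a_e ρ'_e ≤ V_c. -/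
/-- Global optimality from a critical point of the perturbed dual
(Theorem 3, optimality part). -/
theorem global_optimality_from_critical_point (n : ℕ) (c a : Fin n → ℝ) (Vc : ℝ)
    (ha : ∀ e, 0 < a e)
    (σ : Fin n → ℝ) (hσ : ∀ e, 0 < σ e) (ς : ℝ) (hς : 0 ≤ ς)
    (ρ : Fin n → ℝ)
    (hdef : ∀ e, ρ e = (σ e - ς * a e + c e) / (2 * σ e))
    (hbin : ∀ e, ρ e = 0 ∨ ρ e = 1)
    (hstat : ∑ e, a e * ρ e = Vc) :
    ∀ ρ' : Fin n → ℝ, (∀ e, ρ' e = 0 ∨ ρ' e = 1) → ∑ e, a e * ρ' e ≤ Vc →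
      -∑ e, c e * ρ e ≤ -∑ e, c e * ρ' e := by
  intro ρ' hb' hf
  have key : ∀ e, c e * ρ' e - ς * (a e * ρ' e) ≤ c e * ρ e - ς * (a e * ρ e) := by
    intro e
    have hs := hσ e
    have h := hdef e
    rw [eq_div_iff (by positivity)] at h
    rcases hbin e with h1 | h1 <;> rcases hb' e with h2 | h2 <;> rw [h1] at h ⊢ <;> rw [h2] <;>
      linarith
  have hsum := Finset.sum_le_sum (fun e (_ : e ∈ Finset.univ) => key e)
  rw [Finset.sum_sub_distrib, Finset.sum_sub_distrib, ← Finset.mul_sum, ← Finset.mul_sum,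
    hstat] at hsum
  have := mul_le_mul_of_nonneg_left hf hς
  linarith
end

section
/- Weak duality for the perturbed dual: for every β > 0, every binary vector ρ ∈ {0,1}^n with ∑_e a_e ρ_e ≤ V_c, and every (σ, ς) with σ_e > 0 for all e and ς ≥ 0, one has P^d_β(σ, ς) ≤ P^d(σ, ς) ≤ −∑_e c_e ρ_e. -/
/-- Weak duality for the perturbed dual. -/
theorem perturbed_weak_duality (n : ℕ) (c a : Fin n → ℝ) (Vc : ℝ)
    (β : ℝ) (hβ : 0 < β)
    (ρ : Fin n → ℝ) (hbin : ∀ e, ρ e = 0 ∨ ρ e = 1)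
    (hfeas : ∑ e, a e * ρ e ≤ Vc)
    (σ : Fin n → ℝ) (hσ : ∀ e, 0 < σ e) (ς : ℝ) (hς : 0 ≤ ς) :
    ((-(1/4) * ∑ e, (σ e - ς * a e + c e)^2 / σ e - ς * Vc)
        - (1/(4*β)) * ∑ e, (σ e)^2
      ≤ -(1/4) * ∑ e, (σ e - ς * a e + c e)^2 / σ e - ς * Vc) ∧
    (-(1/4) * ∑ e, (σ e - ς * a e + c e)^2 / σ e - ς * Vc ≤ -∑ e, c e * ρ e) := by
  constructor
  · have h : 0 ≤ (1/(4*β)) * ∑ e, (σ e)^2 :=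
      mul_nonneg (by positivity) (Finset.sum_nonneg fun e _ => sq_nonneg _)
    linarith
  · have key : ∑ e, 4 * (c e * ρ e - ς * (a e * ρ e))
        ≤ ∑ e, (σ e - ς * a e + c e)^2 / σ e := by
      apply Finset.sum_le_sum
      intro e _
      rw [le_div_iff₀ (hσ e)]
      rcases hbin e with h | h <;> rw [h]
      · nlinarith [sq_nonneg (σ e - ς * a e + c e)]
      · nlinarith [sq_nonneg (σ e - ς * a e + c e - 2 * σ e)]
    rw [← Finset.mul_sum, Finset.sum_sub_distrib, ← Finset.mul_sum] at key
    have h2 := mul_le_mul_of_nonneg_left hfeas hς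
    linarith
end
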